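/- Let ζ be a primitive aperiodic binary substitution of constant length q ≥ 2 with ζ(0) starting with 0, x = ζ^∞(0), and δ_l(n) = #(K_l ∩ [1,n)²)/(n² − n). Then for every integer ℓ ≥ 1 the density dens(K_l) exists for each l ≥ ℓ and lim_{n→∞} Σ_{l≥ℓ} l·δ_l(n) = Σ_{l≥ℓ} l·dens(K_l), the series on the right being convergent. -/

import Mathlib

open Filter Topology MeasureTheory

namespace RQA

/-- The standard metric on symbolic sequences over an alphabet `α`:
`ρ(x,y) = 2^{-min{i : x i ≠ y i}}` for `x ≠ y` and `ρ(x,x) = 0`. -/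
noncomputable def seqDist {α : Type*} (x y : ℕ → α) : ℝ :=
  haveI := Classical.propDecidable (x = y)
  if x = y then 0 else (2 : ℝ) ^ (-((sInf {i : ℕ | x i ≠ y i} : ℕ) : ℤ))

/-- The (one-sided) shift on sequences. -/
def shift {α : Type*} (x : ℕ → α) : ℕ → α := fun i => x (i + 1)

/-- The embedded sequence `x^{(m)}`, a sequence over the alphabet `α^m`. -/
def embedSeq {α : Type*} (m : ℕ) (x : ℕ → α) : ℕ → (Fin m → α) :=
  fun j t => x (j + (t : ℕ))

section RQAdefs

variable {X : Type*} (d : X → X → ℝ) (f : X → X) (x : X)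

/-- The entry of the recurrence plot at `(i,j)` equals `1`. -/
def RPone (ε : ℝ) (i j : ℕ) : Prop := d (f^[i] x) (f^[j] x) ≤ ε

/-- `(i, j, l)` is a diagonal line in the recurrence plot `RP(x, n, ε)`. -/
def IsLine (n : ℕ) (ε : ℝ) (i j l : ℕ) : Prop :=
  1 ≤ l ∧ i + l ≤ n ∧ j + l ≤ n ∧ i ≠ j ∧
  (∀ h, h < l → RPone d f x ε (i + h) (j + h)) ∧
  (0 < i → 0 < j → ¬ RPone d f x ε (i - 1) (j - 1)) ∧
  (max i j + l < n → ¬ RPone d f x ε (i + l) (j + l))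

/-- `N_l(x, n, ε)`: the number of diagonal lines of length exactly `l`. -/
noncomputable def Nlines (n : ℕ) (ε : ℝ) (l : ℕ) : ℕ :=
  Set.ncard {p : ℕ × ℕ | IsLine d f x n ε p.1 p.2 l}

/-- `P_l(x, n, ε) = N_l/(n² − n)`. -/
noncomputable def Pline (n : ℕ) (ε : ℝ) (l : ℕ) : ℝ :=
  (Nlines d f x n ε l : ℝ) / ((n : ℝ) ^ 2 - (n : ℝ))

/-- `P≥_ℓ(x, n, ε) = Σ_{l ≥ ℓ} P_l`. -/
noncomputable def PlineGe (n : ℕ) (ε : ℝ) (ℓ : ℕ) : ℝ :=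
  ∑' k : ℕ, Pline d f x n ε (ℓ + k)

/-- The recurrence rate `RR_ℓ(x, n, ε) = Σ_{l ≥ ℓ} l · P_l`. -/
noncomputable def RRate (n : ℕ) (ε : ℝ) (ℓ : ℕ) : ℝ :=
  ∑' k : ℕ, ((ℓ + k : ℕ) : ℝ) * Pline d f x n ε (ℓ + k)

/-- The determinism `DET_ℓ(x, n, ε) = RR_ℓ/RR_1`. -/
noncomputable def DETrm (n : ℕ) (ε : ℝ) (ℓ : ℕ) : ℝ :=
  RRate d f x n ε ℓ / RRate d f x n ε 1

/-- The average line length `L_ℓ(x, n, ε) = RR_ℓ/P≥_ℓ`. -/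
noncomputable def LAvg (n : ℕ) (ε : ℝ) (ℓ : ℕ) : ℝ :=
  RRate d f x n ε ℓ / PlineGe d f x n ε ℓ

/-- The entropy of line lengths
`ENT_ℓ(x, n, ε) = log P≥_ℓ − (1/P≥_ℓ)·Σ_{l≥ℓ} P_l · log P_l` (with `0·log 0 = 0`). -/
noncomputable def ENTln (n : ℕ) (ε : ℝ) (ℓ : ℕ) : ℝ :=
  Real.log (PlineGe d f x n ε ℓ) -
    (PlineGe d f x n ε ℓ)⁻¹ *
      ∑' k : ℕ, Pline d f x n ε (ℓ + k) * Real.log (Pline d f x n ε (ℓ + k))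

/-- The correlation sum
`C_ℓ(x, n, ε) = n^{-2}·#{(i,j) ∈ [0,n)² : d_ℓ(f^i x, f^j x) ≤ ε}`,
where `d_ℓ` is the Bowen metric. -/
noncomputable def corrSum (ℓ n : ℕ) (ε : ℝ) : ℝ :=
  (Set.ncard {p : ℕ × ℕ | p.1 < n ∧ p.2 < n ∧
      ∀ k, k < ℓ → d (f^[p.1 + k] x) (f^[p.2 + k] x) ≤ ε} : ℝ) / (n : ℝ) ^ 2

end RQAdefs

/-- The extension of a substitution to a morphism of the free monoid of finite words. -/
def substWord (ζ : Bool → List Bool) : List Bool → List Bool :=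
  fun w => w.foldr (fun a r => ζ a ++ r) []

/-- `ζ` is a (binary) substitution of constant length `q ≥ 2`. -/
def IsConstLenSubst (ζ : Bool → List Bool) (q : ℕ) : Prop :=
  2 ≤ q ∧ ∀ a : Bool, (ζ a).length = q

/-- The language `L_ζ`: subwords of the words `ζ^k(a)`, `a ∈ A`, `k ≥ 1`. -/
def substLang (ζ : Bool → List Bool) : Set (List Bool) :=
  {w | ∃ a : Bool, ∃ k : ℕ, 1 ≤ k ∧ w <:+: (substWord ζ)^[k] [a]}

/-- The substitution subshift `X_ζ`. -/
def SubstShift (ζ : Bool → List Bool) : Set (ℕ → Bool) :=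
  {y | ∀ n : ℕ, (List.ofFn fun t : Fin n => y (t : ℕ)) ∈ substLang ζ}

/-- `ζ` is primitive. -/
def IsPrimitive (ζ : Bool → List Bool) : Prop :=
  ∃ k : ℕ, 1 ≤ k ∧ ∀ a b : Bool, b ∈ (substWord ζ)^[k] [a]

/-- `ζ` is aperiodic: `X_ζ` contains a non-periodic sequence. -/
def IsAperiodic (ζ : Bool → List Bool) : Prop :=
  ∃ y ∈ SubstShift ζ, ∀ p : ℕ, 1 ≤ p → ∃ i : ℕ, y (i + p) ≠ y i

/-- The action of a constant length-`q` substitution on infinite sequences. -/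
def substSeq (ζ : Bool → List Bool) (q : ℕ) (x : ℕ → Bool) : ℕ → Bool :=
  fun i => (ζ (x (i / q))).getD (i % q) false

/-- `(i, j, l)` is a line in the infinite symbolic recurrence plot `RP(x, ∞, ε₀)`. -/
def IsInfLine (x : ℕ → Bool) (i j l : ℕ) : Prop :=
  1 ≤ l ∧ i ≠ j ∧ (∀ h, h < l → x (i + h) = x (j + h)) ∧
  (0 < i → 0 < j → x (i - 1) ≠ x (j - 1)) ∧ x (i + l) ≠ x (j + l)

/-- `K_l`: the set of starting points `(i,j)`, `i,j ≥ 1`, of inner lines of length `l`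
in the infinite symbolic recurrence plot. -/
def Kset (x : ℕ → Bool) (l : ℕ) : Set (ℕ × ℕ) :=
  {p | 1 ≤ p.1 ∧ 1 ≤ p.2 ∧ IsInfLine x p.1 p.2 l}

/-- `#(M ∩ [0,n)²)/n²`. -/
noncomputable def densCount (M : Set (ℕ × ℕ)) (n : ℕ) : ℝ :=
  (Set.ncard (M ∩ {p : ℕ × ℕ | p.1 < n ∧ p.2 < n}) : ℝ) / (n : ℝ) ^ 2

/-- `M ⊆ ℕ²` has asymptotic density `a`. -/
def HasDens (M : Set (ℕ × ℕ)) (a : ℝ) : Prop :=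
  Tendsto (densCount M) atTop (𝓝 a)

/-- `δ_l(n) = #(K_l ∩ [1,n)²)/(n² − n)`. -/
noncomputable def deltaK (x : ℕ → Bool) (l n : ℕ) : ℝ :=
  (Set.ncard (Kset x l ∩ {p : ℕ × ℕ | p.1 < n ∧ p.2 < n}) : ℝ) / ((n : ℝ) ^ 2 - (n : ℝ))

/-- `M` is a minimal subset of the subshift `Y`. -/
def IsMinimalSubset (Y M : Set (ℕ → Bool)) : Prop :=
  M ⊆ Y ∧ M.Nonempty ∧ IsClosed M ∧ (∀ z ∈ M, shift z ∈ M) ∧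
  ∀ M' : Set (ℕ → Bool), M' ⊆ M → M'.Nonempty → IsClosed M' →
    (∀ z ∈ M', shift z ∈ M') → M' = M

end RQA

open RQA

/-!
Passing to a power of the substitution, `x` is the fixed point of a substitution of length `Q` each
of whose letter images contains all letters of `x`.

Existence of `dens(K_l)`: whether `(i, j)` lies in `K_l` depends only on the words of length `l + 2`
starting at `i - 1` and `j - 1`, so it suffices that words have frequencies. Averages over blocks of
length `Q ^ k` below equal letters almost agree, and any two longer blocks contain such a pair of
subblocks; hence the oscillation of block averages contracts geometrically in `k`.

Exchange of limit and sum: `x` is linearly recurrent, so it is either periodic, in which case it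
has no long lines, or a word that reoccurs at distance `p` has length at most `C * p`. In the
second case two occurrences of a word of length `C * D + 1` are more than `D` apart, so in a square
of side `n` only `O(n² / D)` pairs of positions start occurrences of a common word of that length.
Lines are disjoint, and at least half of the points of a line twice as long are such pairs;
therefore the sum of `l * δ_l(n)` over these long `l` is `O(1 / D)` uniformly in large `n`, and
Tannery's theorem, with uniformly small tails in place of domination, applies.
-/

namespace RQA

section Words

variable {α : Type*} {x : ℕ → α} {i j l m : ℕ}

lemma embedSeq_eq_iff : embedSeq l x i = embedSeq l x j ↔ ∀ h < l, x (i + h) = x (j + h) :=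
  ⟨fun heq h hl => congrFun heq ⟨h, hl⟩, fun hall => funext fun t => hall t t.2⟩

lemma embedSeq_add_eq (heq : embedSeq l x i = embedSeq l x j) {r : ℕ} (hr : r + m ≤ l) :
    embedSeq m x (i + r) = embedSeq m x (j + r) := by
  rw [embedSeq_eq_iff] at heq ⊢
  intro h hm
  simpa only [add_assoc] using heq (r + h) (by omega)

/-- Linear recurrence with constant `C`: every word of length `n` occurring in `x` starts in every
window of `C * n` consecutive positions. -/
def IsLinearlyRecurrent (C : ℕ) (x : ℕ → α) : Prop :=
  ∀ t s n : ℕ, 0 < n → ∃ s', s ≤ s' ∧ s' < s + C * n ∧ embedSeq n x s' = embedSeq n x t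

/-- A bound on the exponents of repetitions: a word that reoccurs at distance `p > 0` has length at
most `C * p`. -/
def HasExponentBound (C : ℕ) (x : ℕ → α) : Prop :=
  ∀ i p l : ℕ, 0 < p → embedSeq l x i = embedSeq l x (i + p) → l ≤ C * p

lemma IsLinearlyRecurrent.periodic {C p : ℕ} (hx : IsLinearlyRecurrent C x)
    (hl : C * (p + 1) ≤ l) (heq : embedSeq l x i = embedSeq l x (i + p)) :
    Function.Periodic x p := by
  intro t
  obtain ⟨s, his, hsl, hs⟩ := hx t i (p + 1) p.succ_pos
  rw [embedSeq_eq_iff] at hs heq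
  obtain ⟨d, rfl⟩ := Nat.exists_eq_add_of_le his
  calc x (t + p) = x (i + d + p) := (hs p (by omega)).symm
    _ = x (i + p + d) := by rw [add_right_comm]
    _ = x (i + d) := (heq d (by omega)).symm
    _ = x t := hs 0 (by omega)

lemma IsLinearlyRecurrent.hasExponentBound {C : ℕ} (hx : IsLinearlyRecurrent C x)
    (haper : ∀ p, 0 < p → ¬ Function.Periodic x p) : HasExponentBound (2 * C) x := by
  intro i p l hp heq
  by_contra! hl
  exact haper p hp (hx.periodic (by nlinarith) heq)

lemma HasExponentBound.lt_dist {C D : ℕ} (hx : HasExponentBound C x) (hij : i ≠ j)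
    (hl : C * D < l) (heq : embedSeq l x i = embedSeq l x j) : D < Nat.dist i j := by
  wlog hlt : i < j generalizing i j
  · rw [Nat.dist_comm]
    exact this hij.symm heq.symm (by omega)
  obtain ⟨p, rfl⟩ := Nat.exists_eq_add_of_le hlt.le
  rw [Nat.dist_eq_sub_of_le hlt.le, Nat.add_sub_cancel_left]
  exact Nat.lt_of_mul_lt_mul_left (hl.trans_le (hx i p l (by omega) heq))

end Words

/-- `x` is a fixed point of a substitution of constant length `Q ≥ 2` each of whose letter images
contains every letter of `x`. The substitution itself is left implicit: it exists exactly when equal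
letters `x s = x t` head equal blocks of `x`. Primitive substitutions reduce to this
case on passing to a power. -/
structure IsPrimitiveFixedPoint {α : Type*} (Q : ℕ) (x : ℕ → α) : Prop where
  one_lt : 1 < Q
  embedSeq_block : ∀ s t, x s = x t → embedSeq Q x (s * Q) = embedSeq Q x (t * Q)
  exists_mem_block : ∀ s t, ∃ r < Q, x (s * Q + r) = x t

namespace IsPrimitiveFixedPoint

variable {α : Type*} {Q : ℕ} {x : ℕ → α}

lemma embedSeq_mul (hx : IsPrimitiveFixedPoint Q x) {m s t : ℕ}
    (heq : embedSeq m x s = embedSeq m x t) :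
    embedSeq (m * Q) x (s * Q) = embedSeq (m * Q) x (t * Q) := by
  rw [embedSeq_eq_iff] at heq ⊢
  intro h hh
  have hQ : 0 < Q := by have := hx.one_lt; omega
  have hblock := hx.embedSeq_block _ _ (heq (h / Q) (Nat.div_lt_of_lt_mul (by rwa [mul_comm])))
  have hcoord := embedSeq_eq_iff.1 hblock (h % Q) (Nat.mod_lt _ hQ)
  simpa only [add_mul, add_assoc, Nat.div_add_mod'] using hcoord

lemma embedSeq_mul_pow (hx : IsPrimitiveFixedPoint Q x) {m s t : ℕ}
    (heq : embedSeq m x s = embedSeq m x t) (k : ℕ) :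
    embedSeq (m * Q ^ k) x (s * Q ^ k) = embedSeq (m * Q ^ k) x (t * Q ^ k) := by
  induction k with
  | zero => rwa [pow_zero, mul_one, mul_one, mul_one]
  | succ k ih =>
    rw [pow_succ, ← mul_assoc, ← mul_assoc, ← mul_assoc]
    exact hx.embedSeq_mul ih

lemma embedSeq_pow (hx : IsPrimitiveFixedPoint Q x) {s t : ℕ} (hst : x s = x t) (k : ℕ) :
    embedSeq (Q ^ k) x (s * Q ^ k) = embedSeq (Q ^ k) x (t * Q ^ k) := by
  have hone : embedSeq 1 x s = embedSeq 1 x t :=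
    embedSeq_eq_iff.2 fun h hh => by simpa [Nat.lt_one_iff.1 hh]
  have hpow := hx.embedSeq_mul_pow hone k
  rwa [one_mul] at hpow

lemma exists_recurrence_of_word (hx : IsPrimitiveFixedPoint Q x) (m t : ℕ) :
    ∃ R, ∀ s, ∃ s', s ≤ s' ∧ s' < s + R ∧ embedSeq m x s' = embedSeq m x t := by
  obtain ⟨k, hk⟩ : ∃ k, t + m < Q ^ k := ⟨_, Nat.lt_pow_self hx.one_lt⟩
  refine ⟨2 * (Q * Q ^ k), fun s => ?_⟩
  -- The first `Q ^ k` letters of `x` reappear in each aligned block of length `Q * Q ^ k`.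
  obtain ⟨r, hr, hletter⟩ := hx.exists_mem_block (s / (Q * Q ^ k) + 1) 0
  have hprefix := hx.embedSeq_pow hletter k
  have hr' : r * Q ^ k + Q ^ k ≤ Q * Q ^ k := by
    rw [← Nat.succ_mul]
    exact Nat.mul_le_mul_right _ hr
  have hpos : 0 < Q * Q ^ k := by omega
  have hdiv := Nat.div_add_mod' s (Q * Q ^ k)
  have hmod := Nat.mod_lt s hpos
  have hsplit : ((s / (Q * Q ^ k) + 1) * Q + r) * Q ^ k =
      s / (Q * Q ^ k) * (Q * Q ^ k) + Q * Q ^ k + r * Q ^ k := by ring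
  refine ⟨((s / (Q * Q ^ k) + 1) * Q + r) * Q ^ k + t, by omega, by omega, ?_⟩
  simpa only [zero_mul, zero_add] using embedSeq_add_eq hprefix (r := t) hk.le

variable [Finite α]

lemma exists_uniform_recurrence (hx : IsPrimitiveFixedPoint Q x) (m : ℕ) :
    ∃ R, ∀ t s, ∃ s', s ≤ s' ∧ s' < s + R ∧ embedSeq m x s' = embedSeq m x t := by
  have hword : ∀ w : Set.range (embedSeq m x),
      ∃ R, ∀ s, ∃ s', s ≤ s' ∧ s' < s + R ∧ embedSeq m x s' = w := by
    rintro ⟨_, t, rfl⟩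
    exact hx.exists_recurrence_of_word m t
  choose R hR using hword
  obtain ⟨M, hM⟩ := (Set.finite_range R).bddAbove
  refine ⟨M, fun t s => ?_⟩
  obtain ⟨s', hle, hlt, heq⟩ := hR ⟨_, t, rfl⟩ s
  exact ⟨s', hle, hlt.trans_le (Nat.add_le_add_left (hM ⟨_, rfl⟩) s), heq⟩

theorem exists_isLinearlyRecurrent (hx : IsPrimitiveFixedPoint Q x) :
    ∃ C, IsLinearlyRecurrent C x := by
  obtain ⟨R, hR⟩ := hx.exists_uniform_recurrence 2
  refine ⟨(R + 2) * Q, fun t s n hn => ?_⟩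
  -- A word of length `n ≤ Q ^ k` lies within two consecutive aligned blocks of length `Q ^ k`.
  set k := Nat.log Q n + 1
  have hnk : n < Q ^ k := Nat.lt_pow_succ_log_self hx.one_lt n
  have hkn : Q ^ k ≤ Q * n := by
    rw [pow_succ, mul_comm]
    exact Nat.mul_le_mul_left _ (Nat.pow_log_le_self Q hn.ne')
  set B := Q ^ k
  obtain ⟨b, hle, hlt, hpair⟩ := hR (t / B) (s / B + 1)
  have hblocks : embedSeq (2 * B) x (b * B) = embedSeq (2 * B) x (t / B * B) :=
    hx.embedSeq_mul_pow hpair k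
  have htmod : t % B < B := Nat.mod_lt _ (by omega)
  have hword := embedSeq_add_eq hblocks (r := t % B) (m := n) (by omega)
  rw [Nat.div_add_mod'] at hword
  have hsdiv := Nat.div_add_mod' s B
  have hsmod : s % B < B := Nat.mod_lt _ (by omega)
  have hlower : (s / B + 1) * B ≤ b * B := Nat.mul_le_mul_right _ hle
  have hupper : (b + 1) * B ≤ (s / B + 1 + R) * B := Nat.mul_le_mul_right _ hlt
  have hconst : R * B + 2 * B ≤ (R + 2) * Q * n := by
    rw [← add_mul, mul_assoc]
    exact Nat.mul_le_mul_left _ hkn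
  simp only [add_mul (s / B), add_mul b, add_mul (s / B + 1), one_mul] at hlower hupper
  exact ⟨b * B + t % B, by omega, by omega, hword⟩

end IsPrimitiveFixedPoint

section Tannery

variable {ι κ : Type*} {p : Filter ι}

lemma sum_le_sum_add_of_disjoint {f : κ → ℝ} (hf : ∀ k, 0 ≤ f k) {T : Finset κ} {ε : ℝ}
    (htail : ∀ S, Disjoint S T → ∑ k ∈ S, f k ≤ ε) (S : Finset κ) :
    ∑ k ∈ S, f k ≤ ∑ k ∈ T, f k + ε := by
  classical
  calc ∑ k ∈ S, f k ≤ ∑ k ∈ T ∪ S, f k :=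
        Finset.sum_le_sum_of_subset_of_nonneg Finset.subset_union_right fun k _ _ => hf k
    _ = ∑ k ∈ T, f k + ∑ k ∈ S \ T, f k := by
        rw [← Finset.union_sdiff_self_eq_union, Finset.sum_union Finset.disjoint_sdiff]
    _ ≤ ∑ k ∈ T, f k + ε := by gcongr; exact htail _ Finset.sdiff_disjoint

theorem summable_and_tendsto_tsum_of_tail [p.NeBot] {f : ι → κ → ℝ} {g : κ → ℝ}
    (hf : ∀ n k, 0 ≤ f n k) (hlim : ∀ k, Tendsto (f · k) p (𝓝 (g k)))
    (htail : ∀ ε > 0, ∃ T : Finset κ, ∀ᶠ n in p, ∀ S, Disjoint S T → ∑ k ∈ S, f n k ≤ ε) :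
    Summable g ∧ Tendsto (fun n => ∑' k, f n k) p (𝓝 (∑' k, g k)) := by
  have hg : ∀ k, 0 ≤ g k := fun k => ge_of_tendsto' (hlim k) (hf · k)
  have hsum : ∀ S, Tendsto (fun n => ∑ k ∈ S, f n k) p (𝓝 (∑ k ∈ S, g k)) :=
    fun S => tendsto_finsetSum S fun k _ => hlim k
  have hsummable : Summable g := by
    obtain ⟨T, hT⟩ := htail 1 one_pos
    refine summable_of_sum_le hg (sum_le_sum_add_of_disjoint (T := T) (ε := 1) hg fun S hS => ?_)
    exact le_of_tendsto (hsum S) (hT.mono fun n hn => hn S hS)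
  have hunif : TendstoUniformlyOnFilter (fun S n => ∑ k ∈ S, f n k) (fun n => ∑' k, f n k)
      atTop p := by
    rw [Metric.tendstoUniformlyOnFilter_iff]
    intro ε hε
    obtain ⟨T, hT⟩ := htail (ε / 2) (half_pos hε)
    filter_upwards [(eventually_ge_atTop T).prod_mk hT] with ⟨S, n⟩ ⟨hTS, hn⟩
    have hle := sum_le_sum_add_of_disjoint (hf n) fun U hU => hn U (hU.mono_right hTS)
    have hupper := Real.tsum_le_of_sum_le (hf n) hle
    have hlower := (summable_of_sum_le (hf n) hle).sum_le_tsum S fun k _ => hf n k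
    rw [Real.dist_eq, abs_of_nonneg (sub_nonneg.2 hlower)]
    linarith
  exact ⟨hsummable, hunif.tendsto_of_eventually_tendsto (.of_forall hsum) hsummable.hasSum⟩

end Tannery

section BlockAverages

/-- The average of `f` over the aligned block `[s * B, (s + 1) * B)`, with junk value `0` for
`B = 0`. If these averages vary little with `s` for suitable `B`, then the averages of `f` over
`[0, n)` converge. -/
noncomputable def blockAverage (f : ℕ → ℝ) (B s : ℕ) : ℝ :=
  (∑ r ∈ Finset.range B, f (s * B + r)) / B

lemma sum_range_mul_eq_sum_blocks (f : ℕ → ℝ) (B N : ℕ) :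
    ∑ i ∈ Finset.range (N * B), f i =
      ∑ s ∈ Finset.range N, ∑ r ∈ Finset.range B, f (s * B + r) := by
  induction N with
  | zero => simp
  | succ N ih => rw [Finset.sum_range_succ, ← ih, Nat.succ_mul, Finset.sum_range_add]

lemma blockAverage_mul (f : ℕ → ℝ) (B Q s : ℕ) :
    blockAverage f (Q * B) s = blockAverage (blockAverage f B) Q s := by
  simp only [blockAverage]
  rw [sum_range_mul_eq_sum_blocks (fun i => f (s * (Q * B) + i)), ← Finset.sum_div, div_div]
  push_cast
  rw [mul_comm (B : ℝ)]
  congr! 4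
  ring

lemma blockAverage_mem_Icc {f : ℕ → ℝ} (hf : ∀ i, f i ∈ Set.Icc 0 1) (B s : ℕ) :
    blockAverage f B s ∈ Set.Icc 0 1 := by
  refine ⟨div_nonneg (Finset.sum_nonneg fun r _ => (hf _).1) B.cast_nonneg,
    div_le_one_of_le₀ ?_ B.cast_nonneg⟩
  simpa using Finset.sum_le_card_nsmul (Finset.range B) (fun r => f (s * B + r)) 1
    fun r _ => (hf _).2

lemma blockAverage_sub_const (f : ℕ → ℝ) (c : ℝ) {B : ℕ} (hB : 0 < B) (s : ℕ) :
    blockAverage (fun i => f i - c) B s = blockAverage f B s - c := by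
  have hB' : (B : ℝ) ≠ 0 := by positivity
  simp only [blockAverage, Finset.sum_sub_distrib, Finset.sum_const, Finset.card_range,
    nsmul_eq_mul]
  field_simp

lemma sum_sub_sum_le_of_forall_sub_le {ι : Type*} [Fintype ι] {u v : ι → ℝ} {d e : ℝ}
    (hd : ∀ a b, u a - v b ≤ d) {a b : ι} (he : u a - v b ≤ e) :
    ∑ i, u i - ∑ i, v i ≤ (Fintype.card ι - 1) * d + e := by
  classical
  -- Reindexing the second sum by a transposition pairs `u a` with `v b`.
  rw [← Equiv.sum_comp (Equiv.swap a b) v, ← Finset.sum_sub_distrib,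
    ← Finset.sum_erase_add _ _ (Finset.mem_univ a), Equiv.swap_apply_left]
  have herase := Finset.sum_le_card_nsmul (Finset.univ.erase a)
    (fun i => u i - v (Equiv.swap a b i)) d fun i _ => hd _ _
  rw [Finset.card_erase_of_mem (Finset.mem_univ a), Finset.card_univ, nsmul_eq_mul,
    Nat.cast_pred (Fintype.card_pos_iff.2 ⟨a⟩)] at herase
  exact add_le_add herase he

lemma blockAverage_sub_le_of_exists {f : ℕ → ℝ} {Q s t : ℕ} {d e : ℝ}
    (hd : ∀ i j, f i - f j ≤ d)
    (he : ∃ a < Q, ∃ b < Q, f (s * Q + a) - f (t * Q + b) ≤ e) :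
    blockAverage f Q s - blockAverage f Q t ≤ (1 - 1 / Q) * d + 1 / Q * e := by
  obtain ⟨a, ha, b, hb, he⟩ := he
  have hQ : (0 : ℝ) < Q := by exact_mod_cast a.zero_le.trans_lt ha
  have hsum := sum_sub_sum_le_of_forall_sub_le (u := fun r : Fin Q => f (s * Q + r))
    (v := fun r : Fin Q => f (t * Q + r)) (fun _ _ => hd _ _) (a := ⟨a, ha⟩) (b := ⟨b, hb⟩) he
  rw [Fintype.card_fin] at hsum
  rw [blockAverage, blockAverage, Finset.sum_range, Finset.sum_range, ← sub_div, div_le_iff₀ hQ]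
  refine hsum.trans_eq ?_
  field_simp

lemma abs_sum_range_le_of_blockAverage {g : ℕ → ℝ} {B : ℕ} {δ : ℝ} (hB : 0 < B)
    (hg : ∀ i, |g i| ≤ 1) (hblock : ∀ s, |blockAverage g B s| ≤ δ) (n : ℕ) :
    |∑ i ∈ Finset.range n, g i| ≤ δ * n + B := by
  have hδ : 0 ≤ δ := (abs_nonneg _).trans (hblock 0)
  have hBR : (0 : ℝ) < B := by positivity
  have hfull : ∀ s, |∑ r ∈ Finset.range B, g (s * B + r)| ≤ δ * B := fun s => by
    simpa only [blockAverage, abs_div, Nat.abs_cast, div_le_iff₀ hBR] using hblock s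
  have hdiv : n / B * B ≤ n := Nat.div_mul_le_self n B
  have hmod : n % B ≤ B := (Nat.mod_lt n hB).le
  calc |∑ i ∈ Finset.range n, g i|
      = |∑ s ∈ Finset.range (n / B), ∑ r ∈ Finset.range B, g (s * B + r) +
          ∑ r ∈ Finset.range (n % B), g (n / B * B + r)| := by
        rw [← sum_range_mul_eq_sum_blocks, ← Finset.sum_range_add, Nat.div_add_mod']
    _ ≤ ∑ _s ∈ Finset.range (n / B), δ * B + ∑ _r ∈ Finset.range (n % B), 1 :=
        (abs_add_le _ _).trans (add_le_add
          (Finset.abs_sum_le_sum_abs _ _ |>.trans (Finset.sum_le_sum fun s _ => hfull s))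
          (Finset.abs_sum_le_sum_abs _ _ |>.trans (Finset.sum_le_sum fun r _ => hg _)))
    _ = δ * (n / B * B : ℕ) + (n % B : ℕ) := by
        simp only [Finset.sum_const, Finset.card_range, nsmul_eq_mul]
        push_cast
        ring
    _ ≤ δ * n + B := by gcongr

lemma exists_tendsto_of_forall_eventually_near {u : ℕ → ℝ}
    (hu : ∀ ε > 0, ∃ c, ∀ᶠ n in atTop, |u n - c| ≤ ε) : ∃ c, Tendsto u atTop (𝓝 c) := by
  refine cauchySeq_tendsto_of_complete (Metric.cauchySeq_iff.2 fun ε hε => ?_)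
  obtain ⟨c, hc⟩ := hu (ε / 3) (by positivity)
  obtain ⟨N, hN⟩ := eventually_atTop.1 hc
  refine ⟨N, fun m hm n hn => ?_⟩
  calc dist (u m) (u n) ≤ dist (u m) c + dist (u n) c := dist_triangle_right _ _ _
    _ ≤ ε / 3 + ε / 3 := add_le_add (hN m hm) (hN n hn)
    _ < ε := by linarith

theorem exists_tendsto_average_of_blockAverage {f : ℕ → ℝ} (hf : ∀ i, f i ∈ Set.Icc 0 1)
    (hosc : ∀ ε > 0, ∃ B > 0, ∀ s t, blockAverage f B s - blockAverage f B t ≤ ε) :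
    ∃ c, Tendsto (fun n : ℕ => (∑ i ∈ Finset.range n, f i) / n) atTop (𝓝 c) := by
  refine exists_tendsto_of_forall_eventually_near fun ε hε => ?_
  obtain ⟨B, hB, hB'⟩ := hosc (ε / 2) (half_pos hε)
  set c := blockAverage f B 0
  have hc : c ∈ Set.Icc 0 1 := blockAverage_mem_Icc hf B 0
  have hbound := abs_sum_range_le_of_blockAverage (g := fun i => f i - c) hB
    (fun i => abs_sub_le_of_nonneg_of_le (hf i).1 (hf i).2 hc.1 hc.2)
    (fun s => by
      rw [blockAverage_sub_const f c hB, abs_sub_le_iff]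
      exact ⟨hB' s 0, hB' 0 s⟩)
  refine ⟨c, ?_⟩
  filter_upwards [eventually_gt_atTop 0, eventually_ge_atTop ⌈B / (ε / 2)⌉₊] with n hn0 hn
  have hnR : (0 : ℝ) < n := by positivity
  have hBn : (B : ℝ) ≤ ε / 2 * n := by
    rw [mul_comm, ← div_le_iff₀ (half_pos hε)]
    exact Nat.ceil_le.1 hn
  have hdev : (∑ i ∈ Finset.range n, f i) / n - c = (∑ i ∈ Finset.range n, (f i - c)) / n := by
    rw [Finset.sum_sub_distrib, Finset.sum_const, Finset.card_range, nsmul_eq_mul]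
    field_simp
  rw [hdev, abs_div, Nat.abs_cast, div_le_iff₀ hnR]
  linarith [hbound n]

end BlockAverages

lemma sum_embedSeq_sub_sum_le {α : Type*} {x : ℕ → α} {B m i j : ℕ} {F : (Fin m → α) → ℝ}
    (hF : ∀ w, F w ∈ Set.Icc 0 1) (heq : embedSeq B x i = embedSeq B x j) :
    ∑ r ∈ Finset.range B, F (embedSeq m x (i + r)) -
      ∑ r ∈ Finset.range B, F (embedSeq m x (j + r)) ≤ m := by
  have hterm : ∀ r ∈ Finset.range B, F (embedSeq m x (i + r)) - F (embedSeq m x (j + r)) ≤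
      if B < r + m then 1 else 0 := by
    intro r _
    split_ifs with hr
    · linarith [(hF (embedSeq m x (i + r))).2, (hF (embedSeq m x (j + r))).1]
    · rw [embedSeq_add_eq heq (not_lt.1 hr), sub_self]
  have hcard : ((Finset.range B).filter (B < · + m)).card ≤ m := by
    calc _ ≤ (Finset.Ico (B - m) B).card := Finset.card_le_card fun r => by simp; omega
      _ ≤ m := by rw [Nat.card_Ico]; omega
  rw [← Finset.sum_sub_distrib]
  refine (Finset.sum_le_sum hterm).trans ?_
  rw [Finset.sum_boole]
  exact_mod_cast hcard

namespace IsPrimitiveFixedPoint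

variable {α : Type*} {Q m : ℕ} {x : ℕ → α} {F : (Fin m → α) → ℝ}

lemma blockAverage_sub_le_of_letter_eq (hx : IsPrimitiveFixedPoint Q x)
    (hF : ∀ w, F w ∈ Set.Icc 0 1) {s t : ℕ} (hst : x s = x t) (k : ℕ) :
    blockAverage (fun i => F (embedSeq m x i)) (Q ^ k) s -
      blockAverage (fun i => F (embedSeq m x i)) (Q ^ k) t ≤ m / (Q : ℝ) ^ k := by
  rw [blockAverage, blockAverage, ← sub_div, Nat.cast_pow]
  gcongr
  exact sum_embedSeq_sub_sum_le hF (hx.embedSeq_pow hst k)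

-- Any two blocks of level `k + 1` contain blocks of level `k` below a common letter, whose averages
-- differ by at most `m / Q ^ k ≤ ε`, so each level contracts the excess oscillation by `1 - 1 / Q`.
lemma blockAverage_sub_le_add_pow (hx : IsPrimitiveFixedPoint Q x)
    (hF : ∀ w, F w ∈ Set.Icc 0 1) {ε : ℝ} {k : ℕ} (hk : m / (Q : ℝ) ^ k ≤ ε) (j s t : ℕ) :
    blockAverage (fun i => F (embedSeq m x i)) (Q ^ (k + j)) s -
      blockAverage (fun i => F (embedSeq m x i)) (Q ^ (k + j)) t ≤ ε + (1 - 1 / (Q : ℝ)) ^ j := by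
  have hQ : (1 : ℝ) < Q := by exact_mod_cast hx.one_lt
  induction j generalizing s t with
  | zero =>
    have hε : 0 ≤ ε := le_trans (by positivity) hk
    have hs := blockAverage_mem_Icc (fun i => hF (embedSeq m x i)) (Q ^ (k + 0)) s
    have ht := blockAverage_mem_Icc (fun i => hF (embedSeq m x i)) (Q ^ (k + 0)) t
    rw [pow_zero]
    linarith [hs.2, ht.1]
  | succ j ih =>
    have hcommon : ∃ a < Q, ∃ b < Q,
        blockAverage (fun i => F (embedSeq m x i)) (Q ^ (k + j)) (s * Q + a) -
          blockAverage (fun i => F (embedSeq m x i)) (Q ^ (k + j)) (t * Q + b) ≤ ε := by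
      obtain ⟨a, ha, hxa⟩ := hx.exists_mem_block s 0
      obtain ⟨b, hb, hxb⟩ := hx.exists_mem_block t 0
      refine ⟨a, ha, b, hb, ?_⟩
      refine (hx.blockAverage_sub_le_of_letter_eq hF (hxa.trans hxb.symm) (k + j)).trans
        (le_trans ?_ hk)
      gcongr
      exacts [hQ.le, k.le_add_right j]
    rw [← add_assoc, pow_succ', blockAverage_mul, blockAverage_mul]
    refine (blockAverage_sub_le_of_exists ih hcommon).trans_eq ?_
    ring

lemma exists_blockAverage_sub_le (hx : IsPrimitiveFixedPoint Q x)
    (hF : ∀ w, F w ∈ Set.Icc 0 1) {ε : ℝ} (hε : 0 < ε) :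
    ∃ B > 0, ∀ s t, blockAverage (fun i => F (embedSeq m x i)) B s -
      blockAverage (fun i => F (embedSeq m x i)) B t ≤ ε := by
  have hQ : (1 : ℝ) < Q := by exact_mod_cast hx.one_lt
  obtain ⟨k, hk⟩ := pow_unbounded_of_one_lt (m / (ε / 2)) hQ
  have hk' : m / (Q : ℝ) ^ k ≤ ε / 2 := (div_le_comm₀ (half_pos hε) (by positivity)).1 hk.le
  obtain ⟨j, hj⟩ := exists_pow_lt_of_lt_one (half_pos hε)
    (sub_lt_self (1 : ℝ) (one_div_pos.2 (one_pos.trans hQ)))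
  refine ⟨Q ^ (k + j), Nat.pow_pos (zero_lt_one.trans hx.one_lt), fun s t => ?_⟩
  linarith [hx.blockAverage_sub_le_add_pow hF hk' j s t]

theorem exists_tendsto_average (hx : IsPrimitiveFixedPoint Q x) (hF : ∀ w, F w ∈ Set.Icc 0 1) :
    ∃ c, Tendsto (fun n : ℕ => (∑ i ∈ Finset.range n, F (embedSeq m x i)) / n) atTop (𝓝 c) :=
  exists_tendsto_average_of_blockAverage (fun i => hF (embedSeq m x i))
    fun _ hε => hx.exists_blockAverage_sub_le hF hε

end IsPrimitiveFixedPoint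

section Densities

open scoped Finset

lemma ncard_inter_box_eq_card_filter (M : Set (ℕ × ℕ)) [DecidablePred (· ∈ M)] (n : ℕ) :
    (M ∩ {p : ℕ × ℕ | p.1 < n ∧ p.2 < n}).ncard =
      #{p ∈ Finset.range n ×ˢ Finset.range n | p ∈ M} := by
  rw [← Set.ncard_coe_finset]
  congr 1
  ext p
  simp [and_comm]

lemma card_filter_product_eq_sum {β : Type*} [Fintype β] [DecidableEq β] (c : ℕ → β)
    (P : β × β → Prop) [DecidablePred P] (n : ℕ) :
    #{p ∈ Finset.range n ×ˢ Finset.range n | P (c p.1, c p.2)} =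
      ∑ b with P b, #{i ∈ Finset.range n | c i = b.1} * #{i ∈ Finset.range n | c i = b.2} := by
  rw [Finset.card_eq_sum_card_fiberwise (f := fun p => (c p.1, c p.2)) (t := {b | P b})
    (fun p hp => by simpa using (Finset.mem_filter.1 hp).2)]
  refine Finset.sum_congr rfl fun b hb => ?_
  rw [← Finset.card_product, ← Finset.filter_product, Finset.filter_filter]
  congr 1
  refine Finset.filter_congr fun p _ => ⟨fun hp => Prod.mk.inj hp.2, fun hp => ?_⟩
  have hpb : (c p.1, c p.2) = b := Prod.ext hp.1 hp.2
  exact ⟨hpb ▸ (Finset.mem_filter.1 hb).2, hpb⟩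

lemma hasDens_of_coloring {β : Type*} [Fintype β] [DecidableEq β] {c : ℕ → β} {φ : β → ℝ}
    (hφ : ∀ b, Tendsto (fun n : ℕ => (#{i ∈ Finset.range n | c i = b} : ℝ) / n) atTop (𝓝 (φ b)))
    (P : β × β → Prop) [DecidablePred P] :
    HasDens {p | P (c p.1, c p.2)} (∑ b with P b, φ b.1 * φ b.2) := by
  refine (tendsto_finsetSum _ fun b _ => (hφ b.1).mul (hφ b.2)).congr fun n => ?_
  have hcount := (ncard_inter_box_eq_card_filter {p | P (c p.1, c p.2)} n).trans
    (card_filter_product_eq_sum c P n)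
  rw [densCount, hcount]
  push_cast
  rw [Finset.sum_div]
  exact Finset.sum_congr rfl fun b _ => by rw [div_mul_div_comm, sq]

lemma hasDens_of_hasDens_preimage_succ {M : Set (ℕ × ℕ)} {a : ℝ}
    (hM : ∀ p ∈ M, 1 ≤ p.1 ∧ 1 ≤ p.2) (ha : HasDens {p | (p.1 + 1, p.2 + 1) ∈ M} a) :
    HasDens M a := by
  rw [HasDens, ← tendsto_add_atTop_iff_nat 1]
  have hlim := ha.mul ((tendsto_natCast_div_add_atTop (1 : ℝ)).pow 2)
  rw [one_pow, mul_one] at hlim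
  refine hlim.congr' ?_
  filter_upwards [eventually_gt_atTop 0] with n hn
  have himage : M ∩ {p | p.1 < n + 1 ∧ p.2 < n + 1} = (fun p : ℕ × ℕ => (p.1 + 1, p.2 + 1)) ''
      ({p | (p.1 + 1, p.2 + 1) ∈ M} ∩ {p | p.1 < n ∧ p.2 < n}) := by
    ext ⟨i, j⟩
    constructor
    · rintro ⟨hmem, hi, hj⟩
      obtain ⟨hi1, hj1⟩ := hM _ hmem
      obtain ⟨i, rfl⟩ := Nat.exists_eq_add_of_le' hi1
      obtain ⟨j, rfl⟩ := Nat.exists_eq_add_of_le' hj1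
      exact ⟨(i, j), ⟨hmem, Nat.lt_of_succ_lt_succ hi, Nat.lt_of_succ_lt_succ hj⟩, rfl⟩
    · rintro ⟨p, ⟨hmem, hp1, hp2⟩, hp⟩
      rw [← hp]
      exact ⟨hmem, Nat.succ_lt_succ hp1, Nat.succ_lt_succ hp2⟩
  have hinj : Function.Injective fun p : ℕ × ℕ => (p.1 + 1, p.2 + 1) := fun p p' h => by
    simpa [Prod.ext_iff] using h
  rw [densCount, densCount, himage, Set.ncard_image_of_injective _ hinj]
  push_cast
  field_simp

theorem IsPrimitiveFixedPoint.exists_hasDens {α : Type*} [Finite α] {Q m : ℕ} {x : ℕ → α}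
    (hx : IsPrimitiveFixedPoint Q x) {M : Set (ℕ × ℕ)}
    (hM : ∀ i i' j j', embedSeq m x i = embedSeq m x i' → embedSeq m x j = embedSeq m x j' →
      (i, j) ∈ M → (i', j') ∈ M) :
    ∃ a, HasDens M a := by
  classical
  have := Fintype.ofFinite α
  have hfreq : ∀ w, ∃ a, Tendsto
      (fun n : ℕ => (#{i ∈ Finset.range n | embedSeq m x i = w} : ℝ) / n) atTop (𝓝 a) := by
    intro w
    obtain ⟨a, ha⟩ := hx.exists_tendsto_average (m := m) (F := fun u => if u = w then 1 else 0)
      fun u => by split_ifs <;> simp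
    exact ⟨a, by simpa only [Finset.sum_boole] using ha⟩
  choose φ hφ using hfreq
  have hcolor : M = {p | ∃ p' ∈ M, (embedSeq m x p'.1, embedSeq m x p'.2) =
      (embedSeq m x p.1, embedSeq m x p.2)} := by
    ext p
    refine ⟨fun hp => ⟨p, hp, rfl⟩, ?_⟩
    rintro ⟨p', hp', heq⟩
    exact hM _ _ _ _ (Prod.mk.inj heq).1 (Prod.mk.inj heq).2 hp'
  rw [hcolor]
  exact ⟨_, hasDens_of_coloring hφ
    fun w => ∃ p' ∈ M, (embedSeq m x p'.1, embedSeq m x p'.2) = w⟩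

end Densities

section Lines

open scoped Finset

lemma HasExponentBound.card_occurrences_le {α : Type*} [DecidableEq α] {C : ℕ} {x : ℕ → α}
    (hx : HasExponentBound C x) (D N : ℕ) (w : Fin (C * D + 1) → α) :
    #{j ∈ Finset.range N | w = embedSeq (C * D + 1) x j} ≤ N / (D + 1) + 1 := by
  rw [← Finset.card_range (N / (D + 1) + 1)]
  refine Finset.card_le_card_of_injOn (· / (D + 1)) (fun j hj => ?_) fun j hj j' hj' heq => ?_
  · have hjN : j < N := by simpa using (Finset.mem_filter.1 hj).1
    simpa [Nat.lt_succ_iff] using Nat.div_le_div_right hjN.le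
  · by_contra hne
    have hword := (Finset.mem_filter.1 hj).2.symm.trans (Finset.mem_filter.1 hj').2
    have hdist := hx.lt_dist hne (Nat.lt_succ_self _) hword
    have hj_eq := Nat.div_add_mod j (D + 1)
    have hj'_eq := Nat.div_add_mod j' (D + 1)
    have hmod : j % (D + 1) < D + 1 := Nat.mod_lt j D.succ_pos
    have hmod' : j' % (D + 1) < D + 1 := Nat.mod_lt j' D.succ_pos
    simp only at heq
    rw [heq] at hj_eq
    unfold Nat.dist at hdist
    omega

lemma HasExponentBound.card_recurrences_le {α : Type*} [DecidableEq α] {C : ℕ} {x : ℕ → α}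
    (hx : HasExponentBound C x) (D N : ℕ) :
    #{p ∈ Finset.range N ×ˢ Finset.range N |
      embedSeq (C * D + 1) x p.1 = embedSeq (C * D + 1) x p.2} ≤ N * (N / (D + 1) + 1) := by
  rw [Finset.card_filter, Finset.sum_product]
  simp only [← Finset.card_filter]
  simpa using Finset.sum_le_card_nsmul (Finset.range N) _ _
    fun i _ => hx.card_occurrences_le D N (embedSeq (C * D + 1) x i)

variable {x : ℕ → Bool} {C i j i' j' l l' n t t' : ℕ}

lemma mem_Kset_succ_iff : (i + 1, j + 1) ∈ Kset x l ↔
    1 ≤ l ∧ embedSeq l x (i + 1) = embedSeq l x (j + 1) ∧ x i ≠ x j ∧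
      x (i + 1 + l) ≠ x (j + 1 + l) := by
  simp only [Kset, IsInfLine, Set.mem_ofPred_eq, embedSeq_eq_iff, Nat.add_sub_cancel,
    Nat.succ_pos, true_imp_iff]
  constructor
  · rintro ⟨-, -, hl, -, heq, hstart, hend⟩
    exact ⟨hl, heq, hstart, hend⟩
  · rintro ⟨hl, heq, hstart, hend⟩
    exact ⟨by omega, by omega, hl, by rintro hij; exact hend (by rw [hij]), heq, hstart, hend⟩

lemma embedSeq_eq_of_mem_Kset (h : (i, j) ∈ Kset x l) : embedSeq l x i = embedSeq l x j :=
  embedSeq_eq_iff.2 h.2.2.2.2.1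

lemma offset_le_of_mem_Kset (h : (i, j) ∈ Kset x l) (h' : (i', j') ∈ Kset x l') (ht' : t' < l')
    (hi : i + t = i' + t') (hj : j + t = j' + t') : t' ≤ t := by
  by_contra! hlt
  obtain ⟨hi1, hj1, -, -, -, hstart, -⟩ := h
  have heq := embedSeq_eq_iff.1 (embedSeq_eq_of_mem_Kset h') (t' - t - 1) (by omega)
  rw [show i' + (t' - t - 1) = i - 1 by omega, show j' + (t' - t - 1) = j - 1 by omega] at heq
  exact hstart hi1 hj1 heq

lemma length_le_of_mem_Kset (h : (i, j) ∈ Kset x l) (h' : (i, j) ∈ Kset x l') : l' ≤ l := by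
  by_contra! hlt
  exact h.2.2.2.2.2.2 (embedSeq_eq_iff.1 (embedSeq_eq_of_mem_Kset h') l hlt)

lemma eq_of_mem_Kset_of_add_eq (h : (i, j) ∈ Kset x l) (h' : (i', j') ∈ Kset x l')
    (ht : t < l) (ht' : t' < l') (hi : i + t = i' + t') (hj : j + t = j' + t') :
    l = l' ∧ i = i' ∧ j = j' ∧ t = t' := by
  obtain rfl : t = t' := le_antisymm (offset_le_of_mem_Kset h' h ht hi.symm hj.symm)
    (offset_le_of_mem_Kset h h' ht' hi hj)
  obtain rfl : i = i' := Nat.add_right_cancel hi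
  obtain rfl : j = j' := Nat.add_right_cancel hj
  exact ⟨le_antisymm (length_le_of_mem_Kset h' h) (length_le_of_mem_Kset h h'), rfl, rfl, rfl⟩

lemma HasExponentBound.length_le_of_mem_Kset (hx : HasExponentBound C x) (h : (i, j) ∈ Kset x l)
    (hi : i < n) (hj : j < n) : l ≤ C * n := by
  by_contra! hlt
  have hdist := hx.lt_dist h.2.2.2.1 hlt (embedSeq_eq_of_mem_Kset h)
  unfold Nat.dist at hdist
  omega

-- A line of length `l` passes through `l + 1 - m` pairs of positions at which `x` agrees along
-- `m` letters, and distinct lines through distinct pairs.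
lemma HasExponentBound.sum_sub_mul_ncard_Kset_le (hx : HasExponentBound C x) {m : ℕ} (hm : 0 < m)
    (S : Finset ℕ) (n : ℕ) :
    ∑ l ∈ S, (l + 1 - m) * (Kset x l ∩ {p : ℕ × ℕ | p.1 < n ∧ p.2 < n}).ncard ≤
      #{p ∈ Finset.range ((C + 1) * n) ×ˢ Finset.range ((C + 1) * n) |
        embedSeq m x p.1 = embedSeq m x p.2} := by
  classical
  let starts (l : ℕ) : Finset (ℕ × ℕ) := {p ∈ Finset.range n ×ˢ Finset.range n | p ∈ Kset x l}
  have hcard : ∑ l ∈ S, (l + 1 - m) * (Kset x l ∩ {p : ℕ × ℕ | p.1 < n ∧ p.2 < n}).ncard =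
      #(S.sigma fun l => starts l ×ˢ Finset.range (l + 1 - m)) := by
    rw [Finset.card_sigma]
    refine Finset.sum_congr rfl fun l _ => ?_
    rw [ncard_inter_box_eq_card_filter, Finset.card_product, Finset.card_range, mul_comm]
  have hmem : ∀ z ∈ S.sigma fun l => starts l ×ˢ Finset.range (l + 1 - m),
      (z.2.1.1 < n ∧ z.2.1.2 < n) ∧ (z.2.1.1, z.2.1.2) ∈ Kset x z.1 ∧ z.2.2 + m ≤ z.1 := by
    intro z hz
    simp only [starts, Finset.mem_sigma, Finset.mem_product, Finset.mem_filter,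
      Finset.mem_range] at hz
    exact ⟨hz.2.1.1, hz.2.1.2, by omega⟩
  rw [hcard]
  refine Finset.card_le_card_of_injOn (fun z => (z.2.1.1 + z.2.2, z.2.1.2 + z.2.2)) ?_ ?_
  · intro z hz
    obtain ⟨⟨hi, hj⟩, hK, ht⟩ := hmem z hz
    have hlen := hx.length_le_of_mem_Kset hK hi hj
    have hword := embedSeq_add_eq (embedSeq_eq_of_mem_Kset hK) ht
    simp only [Finset.coe_filter, Finset.mem_product, Finset.mem_range, Set.mem_ofPred_eq, add_mul]
    exact ⟨⟨by omega, by omega⟩, hword⟩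
  · rintro ⟨l, ⟨i, j⟩, t⟩ hz ⟨l', ⟨i', j'⟩, t'⟩ hz' heq
    obtain ⟨-, hK, ht : t + m ≤ l⟩ := hmem _ hz
    obtain ⟨-, hK', ht' : t' + m ≤ l'⟩ := hmem _ hz'
    obtain ⟨hi, hj⟩ := Prod.mk.inj heq
    obtain ⟨rfl, rfl, rfl, rfl⟩ :=
      eq_of_mem_Kset_of_add_eq hK hK' (show t < l by omega) (show t' < l' by omega) hi hj
    rfl

lemma HasExponentBound.sum_mul_ncard_Kset_le (hx : HasExponentBound C x) {D : ℕ}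
    {S : Finset ℕ} (hS : ∀ l ∈ S, 2 * (C * D + 1) ≤ l) (n : ℕ) :
    ∑ l ∈ S, l * (Kset x l ∩ {p : ℕ × ℕ | p.1 < n ∧ p.2 < n}).ncard ≤
      2 * ((C + 1) * n * ((C + 1) * n / (D + 1) + 1)) := by
  have hhalf : ∀ l ∈ S, l ≤ 2 * (l + 1 - (C * D + 1)) := fun l hl => by have := hS l hl; omega
  calc ∑ l ∈ S, l * (Kset x l ∩ {p : ℕ × ℕ | p.1 < n ∧ p.2 < n}).ncard
      ≤ ∑ l ∈ S, 2 * (l + 1 - (C * D + 1)) *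
          (Kset x l ∩ {p : ℕ × ℕ | p.1 < n ∧ p.2 < n}).ncard :=
        Finset.sum_le_sum fun l hl => Nat.mul_le_mul_right _ (hhalf l hl)
    _ ≤ 2 * ((C + 1) * n * ((C + 1) * n / (D + 1) + 1)) := by
        simp only [mul_assoc 2, ← Finset.mul_sum]
        exact Nat.mul_le_mul_left 2 ((hx.sum_sub_mul_ncard_Kset_le (Nat.succ_pos _) S n).trans
          (hx.card_recurrences_le D _))

lemma HasExponentBound.sum_mul_deltaK_le (hx : HasExponentBound C x) {D : ℕ} (hn : D + 1 < n)
    {S : Finset ℕ} (hS : ∀ l ∈ S, 2 * (C * D + 1) ≤ l) :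
    ∑ l ∈ S, l * deltaK x l n ≤ 8 * ((C : ℝ) + 1) ^ 2 / (D + 1) := by
  have hdiv : (((C + 1) * n / (D + 1) + 1 : ℕ) : ℝ) ≤ 2 * ((C + 1) * n / (D + 1)) := by
    have hfloor : (((C + 1) * n / (D + 1) : ℕ) : ℝ) ≤ (C + 1) * n / (D + 1) := by
      simpa using Nat.cast_div_le (α := ℝ) (m := (C + 1) * n) (n := D + 1)
    have hone : (1 : ℝ) ≤ (C + 1) * n / (D + 1) := by
      rw [one_le_div (by positivity)]
      exact_mod_cast hn.le.trans (Nat.le_mul_of_pos_left n C.succ_pos)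
    push_cast at hfloor ⊢
    linarith
  have hn2 : (2 : ℝ) ≤ n := by exact_mod_cast (by omega : 2 ≤ n)
  have hden : (n : ℝ) ^ 2 / 2 ≤ (n : ℝ) ^ 2 - n := by nlinarith
  simp only [deltaK, ← mul_div_assoc]
  rw [← Finset.sum_div, div_le_iff₀ (lt_of_lt_of_le (by positivity) hden)]
  calc ∑ l ∈ S, (l : ℝ) * (Kset x l ∩ {p : ℕ × ℕ | p.1 < n ∧ p.2 < n}).ncard
      ≤ 2 * ((C + 1) * n * ((C + 1) * n / (D + 1) + 1 : ℕ)) := by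
        exact_mod_cast hx.sum_mul_ncard_Kset_le hS n
    _ ≤ 2 * ((C + 1) * n * (2 * ((C + 1) * n / (D + 1)))) := by gcongr
    _ = 8 * ((C : ℝ) + 1) ^ 2 / (D + 1) * (n ^ 2 / 2) := by ring
    _ ≤ _ := by gcongr

lemma Kset_eq_empty_of_periodic {p : ℕ} (hx : Function.Periodic x p) (hp : 0 < p) (hl : p ≤ l) :
    Kset x l = ∅ := by
  refine Set.eq_empty_of_forall_notMem ?_
  rintro ⟨i, j⟩ ⟨hi, hj, -, -, heq, hstart, -⟩
  refine hstart hi hj ?_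
  have hlast := heq (p - 1) (by omega)
  simp only at hi hj hlast ⊢
  rwa [← hx (i - 1), ← hx (j - 1), show i - 1 + p = i + (p - 1) by omega,
    show j - 1 + p = j + (p - 1) by omega]

theorem IsLinearlyRecurrent.exists_sum_mul_deltaK_le (hx : IsLinearlyRecurrent C x) {ε : ℝ}
    (hε : 0 < ε) : ∃ N : ℕ, ∀ᶠ n in atTop, ∀ S : Finset ℕ, (∀ l ∈ S, N ≤ l) →
      ∑ l ∈ S, l * deltaK x l n ≤ ε := by
  by_cases hper : ∃ p, 0 < p ∧ Function.Periodic x p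
  · obtain ⟨p, hp, hxp⟩ := hper
    refine ⟨p, .of_forall fun n S hS => ?_⟩
    rw [Finset.sum_eq_zero fun l hl => ?_]
    · exact hε.le
    · simp [deltaK, Kset_eq_empty_of_periodic hxp hp (hS l hl)]
  · push Not at hper
    have hexp := hx.hasExponentBound hper
    obtain ⟨D, hD⟩ := exists_nat_gt (8 * (((2 * C : ℕ) : ℝ) + 1) ^ 2 / ε)
    refine ⟨2 * (2 * C * D + 1), ?_⟩
    filter_upwards [eventually_gt_atTop (D + 1)] with n hn S hS
    refine (hexp.sum_mul_deltaK_le hn hS).trans ?_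
    rw [div_le_comm₀ (by positivity) hε]
    linarith

lemma deltaK_nonneg (x : ℕ → Bool) (l n : ℕ) : 0 ≤ deltaK x l n :=
  div_nonneg (Nat.cast_nonneg _)
    (sub_nonneg.2 (by exact_mod_cast Nat.le_self_pow two_ne_zero n))

lemma tendsto_deltaK_of_hasDens {a : ℝ} (ha : HasDens (Kset x l) a) :
    Tendsto (deltaK x l) atTop (𝓝 a) := by
  have hlim := ha.mul (tendsto_natCast_div_add_atTop (-1 : ℝ))
  rw [mul_one] at hlim
  refine hlim.congr' ?_
  filter_upwards [eventually_gt_atTop 1] with n hn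
  have hn1 : (1 : ℝ) < n := by exact_mod_cast hn
  have hpred : (n : ℝ) + -1 ≠ 0 := by linarith
  rw [densCount, deltaK, show (n : ℝ) ^ 2 - n = n * (n + -1) by ring]
  field_simp

theorem IsPrimitiveFixedPoint.exists_hasDens_Kset {Q : ℕ} (hx : IsPrimitiveFixedPoint Q x)
    (l : ℕ) : ∃ a, HasDens (Kset x l) a := by
  have hlocal : ∀ i i' j j', embedSeq (l + 2) x i = embedSeq (l + 2) x i' →
      embedSeq (l + 2) x j = embedSeq (l + 2) x j' →
      (i, j) ∈ {p : ℕ × ℕ | (p.1 + 1, p.2 + 1) ∈ Kset x l} →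
      (i', j') ∈ {p : ℕ × ℕ | (p.1 + 1, p.2 + 1) ∈ Kset x l} := by
    intro i i' j j' hi hj
    have hwi := embedSeq_add_eq hi (r := 1) (m := l) (by omega)
    have hwj := embedSeq_add_eq hj (r := 1) (m := l) (by omega)
    rw [embedSeq_eq_iff] at hi hj
    have hi0 := hi 0 (by omega)
    have hj0 := hj 0 (by omega)
    have hil := hi (1 + l) (by omega)
    have hjl := hj (1 + l) (by omega)
    simp only [add_zero, ← add_assoc] at hi0 hj0 hil hjl
    simp only [Set.mem_ofPred_eq, mem_Kset_succ_iff, hwi, hwj, hi0, hj0, hil, hjl]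
    exact id
  obtain ⟨a, ha⟩ := hx.exists_hasDens hlocal
  exact ⟨a, hasDens_of_hasDens_preimage_succ (fun p hp => ⟨hp.1, hp.2.1⟩) ha⟩

end Lines

section Substitutions

variable {ζ : Bool → List Bool} {q : ℕ} {x : ℕ → Bool}

lemma subst_letter_eq_ofFn (hζ : IsConstLenSubst ζ q) (hxfix : substSeq ζ q x = x) (s : ℕ) :
    ζ (x s) = List.ofFn (embedSeq q x (s * q)) := by
  refine List.ext_getElem (by rw [hζ.2, List.length_ofFn]) fun r hr _ => ?_
  have hrq : r < q := hζ.2 (x s) ▸ hr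
  have hfix := congrFun hxfix (s * q + r)
  rw [substSeq, mul_comm, Nat.mul_add_div (by omega), Nat.div_eq_of_lt hrq, add_zero,
    Nat.mul_add_mod, Nat.mod_eq_of_lt hrq, List.getD_eq_getElem _ _ hr] at hfix
  simpa only [List.getElem_ofFn, embedSeq, mul_comm s q] using hfix

lemma substWord_ofFn_embedSeq (hζ : IsConstLenSubst ζ q) (hxfix : substSeq ζ q x = x) (n s : ℕ) :
    substWord ζ (List.ofFn (embedSeq n x s)) = List.ofFn (embedSeq (n * q) x (s * q)) := by
  have hflat : ∀ w, substWord ζ w = (w.map ζ).flatten := fun w => by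
    induction w with
    | nil => rfl
    | cons a w ih => rw [List.map_cons, List.flatten_cons, ← ih]; rfl
  rw [hflat, List.map_ofFn, List.ofFn_mul]
  congr 2
  funext t
  simp only [Function.comp_apply]
  rw [embedSeq, subst_letter_eq_ofFn hζ hxfix]
  congr 1
  funext r
  simp only [embedSeq, add_mul, add_assoc]

lemma substWord_iterate_letter (hζ : IsConstLenSubst ζ q) (hxfix : substSeq ζ q x = x) (k s : ℕ) :
    (substWord ζ)^[k] [x s] = List.ofFn (embedSeq (q ^ k) x (s * q ^ k)) := by
  induction k with
  | zero => simp [embedSeq]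
  | succ k ih =>
    rw [Function.iterate_succ_apply', ih, substWord_ofFn_embedSeq hζ hxfix, pow_succ, mul_assoc]

theorem exists_isPrimitiveFixedPoint (hζ : IsConstLenSubst ζ q) (hprim : IsPrimitive ζ)
    (hxfix : substSeq ζ q x = x) : ∃ Q, IsPrimitiveFixedPoint Q x := by
  obtain ⟨k, hk, hmem⟩ := hprim
  refine ⟨q ^ k, Nat.one_lt_pow (by omega) hζ.1, fun s t hst => ?_, fun s t => ?_⟩
  · refine List.ofFn_injective ?_
    rw [← substWord_iterate_letter hζ hxfix, ← substWord_iterate_letter hζ hxfix, hst]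
  · have hletter := hmem (x s) (x t)
    rw [substWord_iterate_letter hζ hxfix, List.mem_ofFn] at hletter
    obtain ⟨r, hr⟩ := hletter
    exact ⟨r, r.2, hr⟩

end Substitutions

end RQA

theorem tendsto_sum_deltaK_general
    (ζ : Bool → List Bool) (q : ℕ) (hζ : IsConstLenSubst ζ q) (hprim : IsPrimitive ζ)
    (x : ℕ → Bool) (hxfix : substSeq ζ q x = x) (ℓ : ℕ) :
    ∃ dK : ℕ → ℝ,
      (∀ l : ℕ, ℓ ≤ l → HasDens (Kset x l) (dK l)) ∧
      Summable (fun k : ℕ => ((ℓ + k : ℕ) : ℝ) * dK (ℓ + k)) ∧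
      Tendsto (fun n : ℕ => ∑' k : ℕ, ((ℓ + k : ℕ) : ℝ) * deltaK x (ℓ + k) n) atTop
        (𝓝 (∑' k : ℕ, ((ℓ + k : ℕ) : ℝ) * dK (ℓ + k))) := by
  obtain ⟨Q, hx⟩ := exists_isPrimitiveFixedPoint hζ hprim hxfix
  obtain ⟨C, hrec⟩ := hx.exists_isLinearlyRecurrent
  choose dK hdK using hx.exists_hasDens_Kset
  refine ⟨dK, fun l _ => hdK l, summable_and_tendsto_tsum_of_tail
    (fun n k => mul_nonneg (Nat.cast_nonneg _) (deltaK_nonneg x (ℓ + k) n))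
    (fun k => (tendsto_deltaK_of_hasDens (hdK (ℓ + k))).const_mul _) fun ε hε => ?_⟩
  obtain ⟨N, hN⟩ := hrec.exists_sum_mul_deltaK_le hε
  refine ⟨Finset.range N, hN.mono fun n hn S hS => ?_⟩
  have htail := hn (S.map (addLeftEmbedding ℓ)) fun l hl => by
    obtain ⟨k, hk, rfl⟩ := Finset.mem_map.1 hl
    have hNk : N ≤ k := not_lt.1 fun h => Finset.disjoint_left.1 hS hk (Finset.mem_range.2 h)
    exact hNk.trans (Nat.le_add_left k ℓ)
  simpa only [Finset.sum_map, addLeftEmbedding_apply] using htail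

/-- lim_{n→∞} Σ_{l≥ℓ} l·δ_l(n) = Σ_{l≥ℓ} l·dens(K_l). -/
theorem tendsto_sum_deltaK
    (ζ : Bool → List Bool) (q : ℕ) (hζ : IsConstLenSubst ζ q)
    (hprim : IsPrimitive ζ) (hap : IsAperiodic ζ)
    (hζ0 : (ζ false).head? = some false)
    (x : ℕ → Bool) (hx0 : x 0 = false) (hxfix : substSeq ζ q x = x)
    (ℓ : ℕ) (hℓ : 1 ≤ ℓ) :
    ∃ dK : ℕ → ℝ,
      (∀ l : ℕ, ℓ ≤ l → HasDens (Kset x l) (dK l)) ∧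
      Summable (fun k : ℕ => ((ℓ + k : ℕ) : ℝ) * dK (ℓ + k)) ∧
      Tendsto (fun n : ℕ => ∑' k : ℕ, ((ℓ + k : ℕ) : ℝ) * deltaK x (ℓ + k) n) atTop
        (𝓝 (∑' k : ℕ, ((ℓ + k : ℕ) : ℝ) * dK (ℓ + k))) :=
  tendsto_sum_deltaK_general ζ q hζ hprim x hxfix ℓ
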